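/- arXiv:1812.01682 — 2 statements merged into one kernel-verified Lean document; each statement's English description precedes it below -/
import Mathlib

section
/- The number of Fishburn permutations of size n avoiding the classical pattern 321 equals the sum over j from 0 to ⌊(n−1)/2⌋ of ((−1)^j/(n−j))·binom(n−j, j)·binom(2n−3j, n−j+1). -/
open Finset

/-- The list of values of a permutation of `Fin n` (0-based values). -/
def permList {n : ℕ} (π : Equiv.Perm (Fin n)) : List ℕ :=
  (List.finRange n).map fun i => (π i : ℕ)

/-- A sequence `w` of distinct integers contains the classical pattern `p`:
some subsequence of `w` is order-isomorphic to `p`. -/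
def SeqContains (w p : List ℕ) : Prop :=
  ∃ f : Fin p.length → Fin w.length, StrictMono f ∧
    ∀ i j : Fin p.length, p.get i < p.get j ↔ w.get (f i) < w.get (f j)

/-- A permutation avoids a classical pattern (given as the list of its values). -/
def AvoidsPat {n : ℕ} (π : Equiv.Perm (Fin n)) (p : List ℕ) : Prop :=
  ¬ SeqContains (permList π) p

/-- `π` is a Fishburn permutation: it avoids the bivincular pattern (231,{1},{1}),
i.e. there are no positions `i < k` with `π i = π k + 1` and `π i < π (i+1)`
(0-based values, so `π i = π k + 1` encodes `π(i) > 1` and `π(k) = π(i) - 1`). -/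
def IsFishburn {n : ℕ} (π : Equiv.Perm (Fin n)) : Prop :=
  ∀ i k : ℕ, ∀ hi : i < n, ∀ hk : k < n, ∀ _hik : i < k,
    (π ⟨i, hi⟩ : ℕ) = (π ⟨k, hk⟩ : ℕ) + 1 →
    ¬ ((π ⟨i, hi⟩ : ℕ) < (π ⟨i + 1, by omega⟩ : ℕ))

/-- A permutation is indecomposable if it is not the direct sum of two nonempty
permutations, i.e. no proper nonempty initial segment of positions maps onto the
corresponding initial segment of values. -/
def IsIndecomposable {n : ℕ} (π : Equiv.Perm (Fin n)) : Prop :=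
  ¬ ∃ k : ℕ, 0 < k ∧ k < n ∧ ∀ i : Fin n, (i : ℕ) < k → (π i : ℕ) < k


def FT (a j k : ℕ) : ℚ :=
  match a with
  | 0 => if j = 0 then 1 else 0
  | a + 1 => k * (Nat.factorial (a + j)) * (Nat.factorial (2 * a + j + k + 1)) /
      ((Nat.factorial j) * (Nat.factorial (a + 1)) * (Nat.factorial a) *
        (Nat.factorial (a + j + k + 1)))

theorem FT_zero_succ (j k : ℕ) : FT 0 (j+1) k = 0 := by simp [FT]

theorem FT_one (j k : ℕ) : FT 1 j k = k := by
  have h1 : (Nat.factorial j : ℚ) ≠ 0 := by exact_mod_cast Nat.factorial_ne_zero _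
  have h2 : (Nat.factorial (j+k+1) : ℚ) ≠ 0 := by exact_mod_cast Nat.factorial_ne_zero _
  simp [FT]
  field_simp

theorem FT_rec0 (a k : ℕ) : FT (a+2) 0 (k+1) = FT (a+2) 0 k + FT (a+1) 0 (k+2) := by
  have h0 : (Nat.factorial a : ℚ) ≠ 0 := by exact_mod_cast Nat.factorial_ne_zero _
  have h1 : (Nat.factorial (a+k+2) : ℚ) ≠ 0 := by exact_mod_cast Nat.factorial_ne_zero _
  simp only [FT]
  rw [show 2*(a+1)+0+(k+1)+1 = (2*a+k+3)+1 by ring, show 2*(a+1)+0+k+1 = 2*a+k+3 by ring,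
    show 2*a+0+(k+2)+1 = 2*a+k+3 by ring, show a+1+0+(k+1)+1 = (a+k+2)+1 by ring,
    show a+1+0+k+1 = a+k+2 by ring, show a+0+(k+2)+1 = (a+k+2)+1 by ring]
  simp only [Nat.factorial_succ, Nat.add_zero]
  push_cast
  field_simp
  ring

theorem FT_rec (a j k : ℕ) : FT a (j+1) (k+1) =
    FT a (j+1) k + FT (a-1) (j+1) (k+2) + FT a j (k+2) - FT a j (k+1) := by
  match a with
  | 0 => simp [FT]
  | 1 => rw [FT_one, FT_one, FT_one, FT_one, FT_zero_succ]; push_cast; ring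
  | a+2 =>
    have h0 : (Nat.factorial a : ℚ) ≠ 0 := by exact_mod_cast Nat.factorial_ne_zero _
    have h1 : (Nat.factorial (a+j+k+3) : ℚ) ≠ 0 := by exact_mod_cast Nat.factorial_ne_zero _
    have h2 : (Nat.factorial j : ℚ) ≠ 0 := by exact_mod_cast Nat.factorial_ne_zero _
    simp only [FT, show a + 2 - 1 = a + 1 by omega]
    rw [show 2*(a+1)+(j+1)+(k+1)+1 = (2*a+j+k+4)+1 by ring,
      show 2*(a+1)+(j+1)+k+1 = (2*a+j+k+4) by ring,
      show 2*a+(j+1)+(k+2)+1 = (2*a+j+k+4) by ring,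
      show 2*(a+1)+j+(k+2)+1 = (2*a+j+k+4)+1 by ring,
      show 2*(a+1)+j+(k+1)+1 = (2*a+j+k+4) by ring,
      show a+1+(j+1)+(k+1)+1 = (a+j+k+3)+1 by ring,
      show a+1+(j+1)+k+1 = (a+j+k+3) by ring,
      show a+(j+1)+(k+2)+1 = (a+j+k+3)+1 by ring,
      show a+1+j+(k+2)+1 = (a+j+k+3)+1 by ring,
      show a+1+j+(k+1)+1 = (a+j+k+3) by ring,
      show a+1+(j+1) = (a+j)+1+1 by ring,
      show a+(j+1) = (a+j)+1 by ring,
      show a+1+j = (a+j)+1 by ring]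
    simp only [Nat.factorial_succ]
    push_cast
    field_simp
    ring

def FG (n k : ℕ) : ℚ := ∑ j ∈ range (n+1), (-1)^j * FT (n - 2*j) j k

theorem FG_eq (n k N : ℕ) (h : n ≤ 2 * N) (h' : 1 ≤ N) (hN : N ≤ n + 1) :
    FG n k = ∑ j ∈ range N, (-1)^j * FT (n - 2*j) j k := by
  unfold FG
  symm
  apply Finset.sum_subset
  · intro x; simp; omega
  · intro x _ hx
    simp at hx
    obtain ⟨y, rfl⟩ : ∃ y, x = y + 1 := ⟨x-1, by omega⟩
    rw [show n - 2*(y+1) = 0 by omega, FT_zero_succ, mul_zero]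

theorem FG_eq' (n k N : ℕ) (hN : n + 1 ≤ N) :
    FG n k = ∑ j ∈ range N, (-1)^j * FT (n - 2*j) j k := by
  unfold FG
  apply Finset.sum_subset
  · intro x; simp; omega
  · intro x _ hx
    simp at hx
    obtain ⟨y, rfl⟩ : ∃ y, x = y + 1 := ⟨x-1, by omega⟩
    rw [show n - 2*(y+1) = 0 by omega, FT_zero_succ, mul_zero]

theorem FG_zero (k : ℕ) : FG 0 k = 1 := by simp [FG, FT]
theorem FG_one (k : ℕ) : FG 1 k = k := by
  simp [FG, Finset.sum_range_succ, FT_one, FT_zero_succ]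

theorem FG_rec (n k : ℕ) : FG (n+2) (k+1) =
    FG (n+2) k + FG (n+1) (k+2) - FG n (k+2) + FG n (k+1) := by
  rw [FG_eq' (n+2) (k+1) (n+3) (by omega), FG_eq' (n+2) k (n+3) (by omega),
    FG_eq' (n+1) (k+2) (n+3) (by omega), FG_eq' n (k+2) (n+2) (by omega),
    FG_eq' n (k+1) (n+2) (by omega)]
  rw [Finset.sum_range_succ' _ (n+2), Finset.sum_range_succ' _ (n+2),
    Finset.sum_range_succ' _ (n+2)]
  have h : ∀ j, (-1 : ℚ)^(j+1) * FT (n+2-2*(j+1)) (j+1) (k+1) =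
      (-1)^(j+1) * FT (n+2-2*(j+1)) (j+1) k + (-1)^(j+1) * FT (n+1-2*(j+1)) (j+1) (k+2)
      - (-1)^j * FT (n-2*j) j (k+2) + (-1)^j * FT (n-2*j) j (k+1) := by
    intro j
    rw [show n+2-2*(j+1) = n-2*j by omega, show n+1-2*(j+1) = n-2*j-1 by omega, FT_rec]
    ring
  simp only [h, Finset.sum_add_distrib, Finset.sum_sub_distrib]
  have := FT_rec0 n k
  simp only [mul_zero, Nat.sub_zero, pow_zero, one_mul]
  rw [this]
  ring

theorem FG_n_zero (n : ℕ) : FG (n+1) 0 = 0 := by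
  unfold FG
  apply Finset.sum_eq_zero
  intro j _
  rcases h : n + 1 - 2 * j with _ | a
  · obtain ⟨y, rfl⟩ : ∃ y, j = y + 1 := ⟨j-1, by omega⟩
    simp [FT]
  · simp [FT]

/-- The claimed formula. -/
theorem FG_formula (n : ℕ) (hn : 1 ≤ n) : FG n 1 =
    ∑ j ∈ Finset.range ((n - 1) / 2 + 1),
        (-1 : ℚ) ^ j / ((n : ℚ) - (j : ℚ)) * (Nat.choose (n - j) j) *
          (Nat.choose (2 * n - 3 * j) (n - j + 1)) := by
  rw [FG_eq n 1 ((n-1)/2+1) (by omega) (by omega) (by omega)]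
  apply Finset.sum_congr rfl
  intro j hj
  have hj := Finset.mem_range.1 hj
  obtain ⟨a, rfl⟩ : ∃ a, n = a + 1 + 2 * j := ⟨n - 1 - 2*j, by omega⟩
  rw [show a + 1 + 2*j - 2*j = a + 1 by omega, show a+1+2*j-j = a+j+1 by omega,
    show 2*(a+1+2*j) - 3*j = 2*a+j+2 by omega]
  rw [Nat.cast_choose ℚ (show j ≤ a+j+1 by omega), Nat.cast_choose ℚ (show a+j+1+1 ≤ 2*a+j+2 by omega)]
  rw [show a+j+1-j = a+1 by omega, show 2*a+j+2-(a+j+1+1) = a by omega]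
  simp only [FT]
  have h0 : (Nat.factorial a : ℚ) ≠ 0 := by exact_mod_cast Nat.factorial_ne_zero _
  have h1 : (Nat.factorial (a+j) : ℚ) ≠ 0 := by exact_mod_cast Nat.factorial_ne_zero _
  have h2 : (Nat.factorial j : ℚ) ≠ 0 := by exact_mod_cast Nat.factorial_ne_zero _
  have h3 : ((a + 1 + 2 * j : ℕ) : ℚ) - j = a + j + 1 := by push_cast; ring
  have h4 : (a : ℚ) + j + 1 ≠ 0 := by positivity
  rw [h3]
  simp only [Nat.factorial_succ]
  push_cast
  field_simp
  try ring

/-- Number of descendants in the generating tree. -/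
def FD : ℕ → ℕ → Bool → Bool → ℕ
  | 0, _, _, _ => 1
  | l+1, k, b, c => FD l (k+1) b true + ∑ s ∈ Finset.Ico 1 k, FD l s c false
      + if b then 0 else FD l k c false

def FH (l k : ℕ) : ℚ :=
  match l with
  | 0 => 1
  | l+1 => FG (l+1) k - FG l k + FG l 1

theorem FH_one (l : ℕ) : FH l 1 = FG l 1 := by
  cases l with
  | zero => simp [FH, FG_zero]
  | succ l => simp [FH]

theorem FH_key (l k : ℕ) :
    FG (l+1) (k+1) = FG (l+1) k + FH l (k+2) - FH l (k+1) + FG l (k+1) := by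
  cases l with
  | zero => simp [FH, FG_zero, FG_one]
  | succ l => simp only [FH]; rw [FG_rec]; ring

theorem FH_two (l : ℕ) : FG (l+1) 1 = FH l 2 := by
  have := FH_key l 0
  rw [FG_n_zero, zero_add, FH_one] at this
  linarith

theorem FG_sum (l k : ℕ) :
    ∑ s ∈ Finset.Ico 1 (k+1), FG l (s+1) = FG (l+1) (k+1) - FH l (k+2) := by
  induction k with
  | zero => simp [FH_two]
  | succ k ih =>
    rw [Finset.sum_Ico_succ_top (by omega), ih, FH_key l (k+1)]
    ring

theorem FG_sum' (l k : ℕ) :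
    ∑ s ∈ Finset.Ico 1 (k+1), FG l s =
      FG (l+1) (k+1) - FH l (k+2) - FG l (k+1) + FG l 1 := by
  induction k with
  | zero => simp [FH_two]
  | succ k ih =>
    rw [Finset.sum_Ico_succ_top (by omega), ih, FH_key l (k+1)]
    ring

theorem FD_eq (l : ℕ) : ∀ k, 1 ≤ k →
    (FD l k true false : ℚ) = FG l k ∧ (FD l k false false : ℚ) = FG l (k+1) ∧
    (FD l k true true : ℚ) = FH l k ∧ (FD l k false true : ℚ) = FH l (k+1) := by
  induction l with
  | zero => intro k _; simp [FD, FG_zero, FH]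
  | succ l ih =>
    intro k hk
    obtain ⟨k, rfl⟩ : ∃ m, k = m + 1 := ⟨k-1, by omega⟩
    have s1 : ∑ s ∈ Finset.Ico 1 (k+1), (FD l s false false : ℚ) =
        FG (l+1) (k+1) - FH l (k+2) := by
      rw [← FG_sum]
      apply Finset.sum_congr rfl
      intro s hs
      exact (ih s (Finset.mem_Ico.1 hs).1).2.1
    have s2 : ∑ s ∈ Finset.Ico 1 (k+1), (FD l s true false : ℚ) =
        FG (l+1) (k+1) - FH l (k+2) - FG l (k+1) + FG l 1 := by
      rw [← FG_sum']
      apply Finset.sum_congr rfl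
      intro s hs
      exact (ih s (Finset.mem_Ico.1 hs).1).1
    obtain ⟨a1, a2, a3, a4⟩ := ih (k+1) (by omega)
    obtain ⟨b1, b2, b3, b4⟩ := ih (k+2) (by omega)
    have key := FH_key l (k+1)
    have e : FH (l+1) (k+1) = FG (l+1) (k+1) - FG l (k+1) + FG l 1 := rfl
    have e' : FH (l+1) (k+2) = FG (l+1) (k+2) - FG l (k+2) + FG l 1 := rfl
    simp only [add_assoc, Nat.reduceAdd] at *
    refine ⟨?_, ?_, ?_, ?_⟩ <;> simp [FD, s1, s2, a1, a2, b3, b4, add_assoc] <;> linarith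

theorem FD_final (n : ℕ) : (FD n 1 false true : ℚ) = FG (n+1) 1 := by
  rw [(FD_eq n 1 le_rfl).2.2.2, FH_two]

def FAv (r : List ℕ) : Prop := ∀ a b c, List.Sublist [a,b,c] r → ¬ (a < b ∧ b < c)
def FFb (r : List ℕ) : Prop := ∀ B w v A, r = B ++ w :: (v+1) :: A → v+1 < w → v ∉ B

theorem FAv_ins (n : ℕ) (P Q : List ℕ) (hP : ∀ x ∈ P, x < n) (hQ : ∀ x ∈ Q, x < n)
    (hnd : P.Nodup) : FAv (P ++ n :: Q) ↔ FAv (P ++ Q) ∧ P.Pairwise (· > ·) := by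
  constructor
  · intro h
    refine ⟨fun a b c hs => h a b c (hs.trans (by simp)), ?_⟩
    rw [List.pairwise_iff_forall_sublist]
    intro a b hab
    have hb : b < n := hP b (hab.subset (by simp))
    have h1 : List.Sublist [a,b,n] (P ++ n :: Q) := by
      have : List.Sublist ([a,b] ++ [n]) (P ++ n :: Q) := List.Sublist.append hab (by simp)
      simpa using this
    have h2 := h a b n h1
    have h3 : a ≠ b := by
      have := hab.nodup hnd
      simpa using this
    omega
  · rintro ⟨h1, h2⟩ a b c hs ⟨hab, hbc⟩
    have hc : c ≤ n := by
      have : c ∈ P ++ n :: Q := hs.subset (by simp)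
      simp at this
      rcases this with h | h | h
      · exact (hP _ h).le
      · exact h.le
      · exact (hQ _ h).le
    by_cases hcn : c = n
    · subst hcn
      rw [List.sublist_append_iff] at hs
      obtain ⟨l1, l2, e, s1, s2⟩ := hs
      have h4 : List.Sublist [a,b] P := by
        match l1, e with
        | [], e =>
          simp at e; subst e
          rw [List.sublist_cons_iff] at s2
          rcases s2 with s2 | ⟨r, hr, s2⟩
          · have := hQ c (s2.subset (by simp)); omega
          · simp at hr; omega
        | [x], e =>
          simp at e; obtain ⟨rfl, rfl⟩ := e
          rw [List.sublist_cons_iff] at s2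
          rcases s2 with s2 | ⟨r, hr, s2⟩
          · have := hQ c (s2.subset (by simp)); omega
          · simp at hr; omega
        | [x, y], e =>
          simp at e; obtain ⟨rfl, rfl, rfl⟩ := e
          exact s1
        | x :: y :: z :: l, e =>
          simp at e; obtain ⟨rfl, rfl, rfl, _⟩ := e
          have := hP c (s1.subset (by simp)); omega
      have := (List.pairwise_iff_forall_sublist.1 h2) h4
      omega
    · apply h1 a b c _ ⟨hab, hbc⟩
      have h5 := hs.filter (fun x => decide (x ≠ n))
      have e1 : P.filter (fun x => decide (x ≠ n)) = P := by
        rw [List.filter_eq_self]; intro x hx; have := hP x hx; simp; omega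
      have e2 : Q.filter (fun x => decide (x ≠ n)) = Q := by
        rw [List.filter_eq_self]; intro x hx; have := hQ x hx; simp; omega
      have e3 : [a,b,c].filter (fun x => decide (x ≠ n)) = [a,b,c] := by
        rw [List.filter_eq_self]; intro x hx; simp at hx ⊢; omega
      rw [e3, List.filter_append, List.filter_cons_of_neg (by simp), e1, e2] at h5
      exact h5

theorem FFb_ins (n : ℕ) (P Q : List ℕ) (hP : ∀ x ∈ P, x < n) (hQ : ∀ x ∈ Q, x < n) :
    FFb (P ++ n :: Q) ↔ FFb (P ++ Q) ∧ ∀ v A, Q = (v+1) :: A → v ∉ P := by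
  constructor
  · intro h
    refine ⟨?_, ?_⟩
    · intro B w v A e hvw hv
      rw [List.append_eq_append_iff] at e
      rcases e with ⟨B', rfl, rfl⟩ | ⟨c, rfl, e⟩
      · exact h (P ++ n :: B') w v A (by simp) hvw (by simp at hv ⊢; tauto)
      · match c, e with
        | [], e =>
          simp at e; subst e
          exact h (B ++ [n]) w v A (by simp) hvw (by simp [hv])
        | [x], e =>
          simp at e
          obtain ⟨rfl, rfl⟩ := e
          have := hQ (v+1) (by simp)
          exact h (B ++ [w]) n v A (by simp) this (by simp [hv])
        | x :: y :: c, e =>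
          simp at e
          obtain ⟨rfl, rfl, rfl⟩ := e
          exact h B w v (c ++ n :: Q) (by simp) hvw hv
    · rintro v A rfl
      exact h P n v A rfl (hQ _ (by simp))
  · rintro ⟨h1, h2⟩ B w v A e hvw hv
    have hw : w ≤ n := by
      have : w ∈ P ++ n :: Q := by rw [e]; simp
      simp at this
      rcases this with h | h | h
      · exact (hP _ h).le
      · exact h.le
      · exact (hQ _ h).le
    rw [List.append_eq_append_iff] at e
    rcases e with ⟨B', rfl, e⟩ | ⟨c, rfl, e⟩
    · match B', e with
      | [], e =>
        simp at e
        obtain ⟨rfl, rfl⟩ := e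
        exact h2 v A rfl (by simpa using hv)
      | x :: B', e =>
        simp at e
        obtain ⟨rfl, rfl⟩ := e
        refine h1 (P ++ B') w v A (by simp) hvw ?_
        simp at hv ⊢
        rcases hv with hv | hv | hv
        · exact Or.inl hv
        · omega
        · exact Or.inr hv
    · match c, e with
      | [], e =>
        simp at e
        obtain ⟨rfl, rfl⟩ := e
        exact h2 v A rfl (by simpa using hv)
      | [x], e =>
        simp at e
        omega
      | x :: y :: c, e =>
        simp at e
        obtain ⟨rfl, rfl, rfl⟩ := e
        exact h1 B w v (c ++ Q) (by simp) hvw hv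

def FK (r : List ℕ) : ℕ := Nat.findGreatest (fun s => (r.take s).Pairwise (· > ·)) r.length

theorem FK_le (r : List ℕ) : FK r ≤ r.length := Nat.findGreatest_le _

theorem FK_iff (r : List ℕ) (s : ℕ) (hs : s ≤ r.length) :
    (r.take s).Pairwise (· > ·) ↔ s ≤ FK r := by
  constructor
  · intro h
    exact Nat.le_findGreatest hs h
  · intro h
    have : (r.take (FK r)).Pairwise (· > ·) :=
      Nat.findGreatest_spec (P := fun s => (r.take s).Pairwise (· > ·)) (m := 0) (Nat.zero_le _) (by simp)
    exact this.sublist ((List.take_prefix_take_left h).sublist)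

theorem FK_pos (r : List ℕ) (h : 1 ≤ r.length) : 1 ≤ FK r := by
  rw [← FK_iff r 1 h]
  cases r <;> simp

theorem FK_unique (r : List ℕ) (k : ℕ) (hk : k ≤ r.length) (h1 : (r.take k).Pairwise (· > ·))
    (h2 : k < r.length → ¬ (r.take (k+1)).Pairwise (· > ·)) : FK r = k := by
  apply le_antisymm
  · by_contra hlt
    push Not at hlt
    have := FK_le r
    exact h2 (by omega) ((FK_iff r (k+1) (by omega)).2 hlt)
  · exact (FK_iff r k hk).1 h1

open Classical in
noncomputable def FB (r : List ℕ) : Bool :=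
  decide (∃ v, r[FK r]? = some (v+1) ∧ v ∈ r.take (FK r))

def FC (n : ℕ) (r : List ℕ) : Bool := decide (r.head? = some (n-1))

def FI (n : ℕ) (r : List ℕ) (s : ℕ) : List ℕ := r.take s ++ n :: r.drop s

theorem FK_FI_zero (n : ℕ) (r : List ℕ) (h : ∀ x ∈ r, x < n) : FK (FI n r 0) = FK r + 1 := by
  have hk := FK_le r
  have key : ∀ s, ((FI n r 0).take (s+1)).Pairwise (· > ·) ↔ (r.take s).Pairwise (· > ·) := by
    intro s
    simp only [FI, List.take_zero, List.drop_zero, List.nil_append, List.take_succ_cons,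
      List.pairwise_cons]
    constructor
    · exact fun h => h.2
    · exact fun h' => ⟨fun a ha => h a (List.mem_of_mem_take ha), h'⟩
  apply FK_unique
  · simp [FI]; exact hk
  · rw [key, FK_iff _ _ hk]
  · intro hlt
    have : FK r + 1 ≤ r.length := by simpa [FI] using hlt
    rw [key, FK_iff _ _ this]
    omega

theorem FK_FI_pos (n : ℕ) (r : List ℕ) (h : ∀ x ∈ r, x < n) (s : ℕ) (h1 : 1 ≤ s) (h2 : s ≤ FK r) :
    FK (FI n r s) = s := by
  have hk := FK_le r
  have hlen : (r.take s).length = s := by simp; omega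
  apply FK_unique
  · simp [FI]; omega
  · rw [FI, List.take_append_of_le_length (by omega), List.take_of_length_le (by omega),
      FK_iff _ _ (by omega)]
    exact h2
  · intro _
    have e : (FI n r s).take (s+1) = r.take s ++ [n] := by
      rw [FI, List.take_append, hlen, List.take_of_length_le (by omega)]
      simp
    rw [e]
    intro hp
    obtain ⟨x, hx⟩ : ∃ x, x ∈ r.take s := by
      apply List.exists_mem_of_ne_nil
      intro h0; rw [h0] at hlen; simp at hlen; omega
    have h3 := (List.pairwise_append.1 hp).2.2 x hx n (by simp)
    have := h x (List.mem_of_mem_take hx)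
    omega

theorem FB_FI_zero (n : ℕ) (r : List ℕ) (h : ∀ x ∈ r, x < n) : FB (FI n r 0) = FB r := by
  unfold FB
  rw [FK_FI_zero n r h]
  apply decide_eq_decide.2
  apply exists_congr
  intro v
  simp only [FI, List.take_zero, List.drop_zero, List.nil_append, List.take_succ_cons,
    List.getElem?_cons_succ, List.mem_cons]
  constructor
  · rintro ⟨h1, h2⟩
    refine ⟨h1, h2.resolve_left ?_⟩
    rintro rfl
    have := h (v+1) (List.mem_of_getElem? h1)
    omega
  · rintro ⟨h1, h2⟩
    exact ⟨h1, Or.inr h2⟩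

theorem FB_FI_pos (n : ℕ) (hn : 1 ≤ n) (r : List ℕ) (h : ∀ x ∈ r, x < n) (s : ℕ) (h1 : 1 ≤ s)
    (h2 : s ≤ FK r) : FB (FI n r s) = FC n r := by
  have hk := FK_le r
  have hlen : (r.take s).length = s := by simp; omega
  unfold FB FC
  rw [FK_FI_pos n r h s h1 h2]
  apply decide_eq_decide.2
  have e1 : (FI n r s)[s]? = some n := by
    rw [FI, List.getElem?_append_right (by omega), hlen]; simp
  have e2 : (FI n r s).take s = r.take s := by
    rw [FI, List.take_append_of_le_length (by omega), List.take_of_length_le (by omega)]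
  have hp := (FK_iff r s (by omega)).2 h2
  rw [e1, e2]
  obtain ⟨m, rfl⟩ : ∃ m, n = m + 1 := ⟨n-1, by omega⟩
  obtain ⟨s, rfl⟩ : ∃ m, s = m + 1 := ⟨s-1, by omega⟩
  cases r with
  | nil => simp at hk; omega
  | cons x t =>
    simp only [List.take_succ_cons, List.pairwise_cons] at hp
    simp
    constructor
    · rintro (h | h')
      · exact h.symm
      · have h3 := hp.1 m h'
        have := h x (by simp)
        omega
    · intro h; exact Or.inl h.symm

theorem FC_FI_zero (n : ℕ) (r : List ℕ) : FC (n+1) (FI n r 0) = true := by simp [FC, FI]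

theorem FC_FI_pos (n : ℕ) (r : List ℕ) (h : ∀ x ∈ r, x < n) (s : ℕ) (h1 : 1 ≤ s) (h2 : 1 ≤ r.length) :
    FC (n+1) (FI n r s) = false := by
  obtain ⟨s, rfl⟩ : ∃ m, s = m + 1 := ⟨s-1, by omega⟩
  cases r with
  | nil => simp at h2
  | cons x t =>
    have := h x (by simp)
    simp [FC, FI]; omega

open Classical in
noncomputable def FV (n : ℕ) : Finset (List ℕ) :=
  ((List.range n).permutations.toFinset).filter (fun r => FAv r ∧ FFb r)

theorem mem_FV (n : ℕ) (r : List ℕ) : r ∈ FV n ↔ List.Perm r (List.range n) ∧ FAv r ∧ FFb r := by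
  simp [FV]

noncomputable def FS (r : List ℕ) : Finset ℕ :=
  (Finset.range (FK r + 1)).filter (fun s => s = FK r → FB r = false)

theorem FI_mem (n : ℕ) (r : List ℕ) (hr : List.Perm r (List.range n)) (s : ℕ) (hs : s ≤ r.length) :
    FI n r s ∈ FV (n+1) ↔ r ∈ FV n ∧ s ∈ FS r := by
  have hlt : ∀ x ∈ r, x < n := fun x hx => by simpa using hr.subset hx
  have hp : List.Perm (FI n r s) (List.range (n+1)) := by
    rw [List.range_succ]
    unfold FI
    refine List.perm_middle.trans ?_
    rw [List.take_append_drop]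
    exact (List.Perm.cons n hr).trans (by simpa using (List.perm_append_singleton n (List.range n)).symm)
  have hnd : r.Nodup := hr.nodup_iff.2 List.nodup_range
  rw [mem_FV, mem_FV]
  unfold FI at *
  rw [FAv_ins n _ _ (fun x hx => hlt x (List.mem_of_mem_take hx))
    (fun x hx => hlt x (List.mem_of_mem_drop hx)) (hnd.sublist (List.take_sublist _ _)),
    FFb_ins n _ _ (fun x hx => hlt x (List.mem_of_mem_take hx))
    (fun x hx => hlt x (List.mem_of_mem_drop hx)), List.take_append_drop, FK_iff _ _ hs]
  have key : s ≤ FK r → ((∀ v A, r.drop s = (v+1) :: A → v ∉ r.take s) ↔ (s = FK r → FB r = false)) := by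
    intro hsk
    constructor
    · rintro h rfl
      simp only [FB, decide_eq_false_iff_not]
      rintro ⟨v, h1, h2⟩
      obtain ⟨hl, h1⟩ := List.getElem?_eq_some_iff.1 h1
      exact h v (r.drop (FK r + 1)) (by rw [← h1]; exact List.drop_eq_getElem_cons hl) h2
    · intro h v A e hv
      have e2 : r[s]? = some (v+1) := by
        have := congrArg (fun l => l[0]?) e
        simpa using this
      by_cases h3 : s = FK r
      · have := h h3
        simp only [FB, decide_eq_false_iff_not] at this
        exact this ⟨v, h3 ▸ e2, h3 ▸ hv⟩
      · obtain ⟨hl, h1⟩ := List.getElem?_eq_some_iff.1 e2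
        have hpw := (FK_iff r (s+1) (by omega)).2 (by omega)
        rw [List.take_succ_eq_append_getElem hl, List.pairwise_append] at hpw
        have := hpw.2.2 v hv (r[s]) (by simp)
        omega
  have : s ∈ FS r ↔ s ≤ FK r ∧ (s = FK r → FB r = false) := by
    simp [FS, Nat.lt_succ_iff]
  rw [this]
  constructor
  · rintro ⟨_, ⟨h1, h2⟩, h3, h4⟩
    exact ⟨⟨hr, h1, h3⟩, h2, (key h2).1 h4⟩
  · rintro ⟨⟨_, h1, h3⟩, h2, h4⟩
    exact ⟨hp, ⟨h1, h2⟩, h3, (key h2).2 h4⟩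

theorem FV_sum (n : ℕ) (φ : List ℕ → ℕ) :
    ∑ r ∈ FV (n+1), φ r = ∑ r ∈ FV n, ∑ s ∈ FS r, φ (FI n r s) := by
  rw [Finset.sum_sigma']
  symm
  have hS : ∀ r s, s ∈ FS r → s ≤ r.length := by
    intro r s hs
    have := FK_le r
    simp [FS] at hs
    omega
  apply Finset.sum_bij (fun x _ => FI n x.1 x.2)
  · rintro ⟨r, s⟩ h
    simp only [Finset.mem_sigma] at h
    exact (FI_mem n r ((mem_FV n r).1 h.1).1 s (hS _ _ h.2)).2 h
  · rintro ⟨r, s⟩ h ⟨r', s'⟩ h' e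
    simp only [Finset.mem_sigma] at h h' e
    have hr := ((mem_FV n r).1 h.1).1
    have hr' := ((mem_FV n r').1 h'.1).1
    have hs := hS _ _ h.2
    have hs' := hS _ _ h'.2
    have hlt : ∀ x ∈ r, x ≠ n := fun x hx => by have := hr.subset hx; simp at this; omega
    have hlt' : ∀ x ∈ r', x ≠ n := fun x hx => by have := hr'.subset hx; simp at this; omega
    have idx : ∀ (q : List ℕ) (t : ℕ), t ≤ q.length → (∀ x ∈ q, x ≠ n) →
        (FI n q t).idxOf n = t ∧ (FI n q t).erase n = q := by
      intro q t ht hq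
      have hn : n ∉ q.take t := fun hx => hq n (List.mem_of_mem_take hx) rfl
      constructor
      · rw [FI, List.idxOf_append_of_notMem hn]; simp [ht]
      · rw [FI, List.erase_append_right _ hn]; simp
    have i1 := idx r s hs hlt
    have i2 := idx r' s' hs' hlt'
    rw [e] at i1
    obtain rfl : r = r' := i1.2.symm.trans i2.2
    obtain rfl : s = s' := i1.1.symm.trans i2.1
    rfl
  · intro q hq
    have hqp := ((mem_FV _ q).1 hq).1
    have hmem : n ∈ q := hqp.symm.subset (by simp)
    obtain ⟨P, Q, rfl⟩ := List.append_of_mem hmem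
    have hp : List.Perm (P ++ Q) (List.range n) := by
      rw [List.range_succ] at hqp
      have := (List.perm_middle.symm.trans hqp).trans (List.perm_append_singleton n (List.range n))
      exact (List.perm_cons n).1 this
    have e : FI n (P++Q) P.length = P ++ n :: Q := by simp [FI]
    refine ⟨⟨P ++ Q, P.length⟩, ?_, e⟩
    rw [← e] at hq
    simpa using (FI_mem n (P++Q) hp P.length (by simp)).1 hq
  · intros; rfl

theorem FV_one : FV 1 = {[0]} := by
  ext r
  rw [mem_FV]
  simp only [List.range_one, List.perm_singleton, Finset.mem_singleton]
  constructor
  · exact fun h => h.1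
  · rintro rfl
    refine ⟨rfl, ?_, ?_⟩
    · intro a b c h; have := h.length_le; simp at this
    · intro B w v A h
      have := congrArg List.length h; simp at this; omega

theorem FV_step (n l : ℕ) (hn : 1 ≤ n) (r : List ℕ) (hr : r ∈ FV n) :
    ∑ s ∈ FS r, FD l (FK (FI n r s)) (FB (FI n r s)) (FC (n+1) (FI n r s)) =
      FD (l+1) (FK r) (FB r) (FC n r) := by
  have hp := ((mem_FV n r).1 hr).1
  have hlt : ∀ x ∈ r, x < n := fun x hx => by simpa using hp.subset hx
  have hlen : r.length = n := by simpa using hp.length_eq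
  have hk := FK_pos r (by omega)
  have e : FS r = insert 0 (Finset.Ico 1 (FK r) ∪ if FB r then ∅ else {FK r}) := by
    ext s
    cases hB : FB r <;> simp [FS, hB] <;> omega
  have hpos : ∀ s, 1 ≤ s → s ≤ FK r →
      FD l (FK (FI n r s)) (FB (FI n r s)) (FC (n+1) (FI n r s)) = FD l s (FC n r) false := by
    intro s h1 h2
    rw [FK_FI_pos n r hlt s h1 h2, FB_FI_pos n hn r hlt s h1 h2, FC_FI_pos n r hlt s h1 (by omega)]
  rw [e, Finset.sum_insert (by cases FB r <;> simp <;> omega),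
    Finset.sum_union (by cases FB r <;> simp), FK_FI_zero n r hlt, FB_FI_zero n r hlt, FC_FI_zero]
  rw [FD, add_assoc]
  congr 2
  · apply Finset.sum_congr rfl
    intro s hs
    simp at hs
    exact hpos s hs.1 hs.2.le
  · cases hB : FB r
    · simp only [Bool.false_eq_true, if_false, Finset.sum_singleton]
      exact hpos _ hk le_rfl
    · simp

theorem FV_total (n : ℕ) : ∀ l, ∑ r ∈ FV (n+1), FD l (FK r) (FB r) (FC (n+1) r) =
    FD (l+n) 1 false true := by
  induction n with
  | zero =>
    intro l
    have h1 : FK [0] = 1 := by apply FK_unique <;> simp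
    have h2 : FB [0] = false := by simp [FB, h1]
    simp [FV_one, h1, h2, FC]
  | succ n ih =>
    intro l
    rw [FV_sum, Finset.sum_congr rfl (fun r hr => FV_step (n+1) l (by omega) r hr), ih (l+1)]
    congr 1; omega

theorem FV_card (n : ℕ) : (FV (n+1)).card = FD n 1 false true := by
  have := FV_total n 0
  simpa [FD] using this
theorem FAv_iff (l : List ℕ) : ¬ SeqContains l [3,2,1] ↔ FAv l.reverse := by
  have key : SeqContains l [3,2,1] ↔ ∃ a b c, List.Sublist [a,b,c] l ∧ (c < b ∧ b < a) := by
    constructor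
    · rintro ⟨f, hf, h⟩
      change Fin 3 → Fin l.length at f
      refine ⟨l.get (f 0), l.get (f 1), l.get (f 2), ?_, ?_, ?_⟩
      · rw [List.sublist_iff_exists_fin_orderEmbedding_get_eq]
        refine ⟨OrderEmbedding.ofStrictMono f hf, ?_⟩
        intro i
        change Fin 3 at i
        fin_cases i <;> rfl
      · exact (h (2 : Fin 3) (1 : Fin 3)).1 (by decide)
      · exact (h (1 : Fin 3) (0 : Fin 3)).1 (by decide)
    · rintro ⟨a, b, c, hs, h1, h2⟩
      rw [List.sublist_iff_exists_fin_orderEmbedding_get_eq] at hs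
      obtain ⟨f, hf⟩ := hs
      refine ⟨f, f.strictMono, ?_⟩
      intro i j
      have e : ∀ i, l.get (f i) = [a,b,c].get i := fun i => (hf i).symm
      have e' : ([3,2,1].get i < [3,2,1].get j ↔ [a,b,c].get i < [a,b,c].get j) := by
        change Fin 3 at i j
        fin_cases i <;> fin_cases j <;> simp <;> omega
      rw [e']
      exact Iff.of_eq (congrArg₂ (· < ·) (e i).symm (e j).symm)
  rw [key]
  constructor
  · intro h a b c hs hc
    apply h
    refine ⟨c, b, a, ?_, hc⟩
    rw [← List.reverse_sublist]
    simpa using hs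
  · rintro h ⟨a, b, c, hs, hc⟩
    refine h c b a ?_ hc
    rw [← List.reverse_sublist]
    simpa using hs

theorem permList_length {n : ℕ} (π : Equiv.Perm (Fin n)) : (permList π).length = n := by
  simp [permList]

theorem permList_get {n : ℕ} (π : Equiv.Perm (Fin n)) (i : ℕ) (hi : i < n) :
    (permList π)[i]? = some (π ⟨i, hi⟩ : ℕ) := by
  simp [permList, hi]

theorem FFb_iff {n : ℕ} (π : Equiv.Perm (Fin n)) : IsFishburn π ↔ FFb (permList π).reverse := by
  constructor
  · intro h B w v A e hvw hv
    have e2 : permList π = A.reverse ++ (v+1) :: w :: B.reverse := by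
      have := congrArg List.reverse e
      simpa using this
    obtain ⟨t, ht⟩ := List.mem_iff_getElem?.1 (List.mem_reverse.2 hv)
    have htl : t < B.reverse.length := (List.getElem?_eq_some_iff.1 ht).1
    have hl := permList_length π
    rw [e2] at hl
    simp at hl htl
    have g : ∀ i (hi : i < n), (A.reverse ++ (v+1) :: w :: B.reverse)[i]? = some (π ⟨i, hi⟩ : ℕ) := by
      intro i hi; rw [← e2]; exact permList_get π i hi
    have g1 := g A.length (by omega)
    have g2 := g (A.length + 1) (by omega)
    have g3 := g (A.length + 2 + t) (by omega)
    rw [List.getElem?_append_right (by simp)] at g1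
    rw [List.getElem?_append_right (by simp)] at g2
    rw [List.getElem?_append_right (by simp; omega)] at g3
    simp only [List.length_reverse] at g1 g2 g3
    rw [show A.length - A.length = 0 by omega] at g1
    rw [show A.length + 1 - A.length = 1 by omega] at g2
    rw [show A.length + 2 + t - A.length = t + 1 + 1 by omega, List.getElem?_cons_succ,
      List.getElem?_cons_succ, ht] at g3
    simp only [List.getElem?_cons_succ, List.getElem?_cons_zero, Option.some.injEq] at g1 g2 g3
    refine h A.length (A.length + 2 + t) (by omega) (by omega) (by omega) ?_ ?_
    · rw [← g1, ← g3]
    · rw [← g1, ← g2]; exact hvw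
  · intro h i k hi hk hik h1 h2
    have hik2 : i + 1 ≠ k := by
      rintro rfl
      omega
    have hl := permList_length π
    have d1 : permList π = (permList π).take i ++ (permList π)[i] :: (permList π)[i+1] ::
        (permList π).drop (i+2) := by
      rw [← List.drop_eq_getElem_cons, ← List.drop_eq_getElem_cons, List.take_append_drop]
    have q1 : (permList π)[i] = (π ⟨i, hi⟩ : ℕ) := by simp [permList]
    have q2 : (permList π)[i+1] = (π ⟨i+1, by omega⟩ : ℕ) := by simp [permList]
    rw [q1, q2, h1] at d1
    refine h ((permList π).drop (i+2)).reverse (π ⟨i+1, by omega⟩) (π ⟨k, hk⟩)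
      ((permList π).take i).reverse ?_ ?_ ?_
    · conv_lhs => rw [d1]
      simp
    · omega
    · rw [List.mem_reverse, List.mem_iff_getElem?]
      refine ⟨k - (i+2), ?_⟩
      rw [List.getElem?_drop, show i + 2 + (k - (i+2)) = k by omega]
      exact permList_get π k hk

theorem permList_perm {n : ℕ} (π : Equiv.Perm (Fin n)) :
    List.Perm (permList π) (List.range n) := by
  have h := (Equiv.Perm.map_finRange_perm π).map (fun i : Fin n => (i : ℕ))
  rw [List.map_map] at h
  have e : (List.finRange n).map (fun i : Fin n => (i : ℕ)) = List.range n := by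
    apply List.ext_getElem <;> simp
  rw [e] at h
  exact h

theorem permList_inj {n : ℕ} {π σ : Equiv.Perm (Fin n)} (h : permList π = permList σ) : π = σ := by
  ext i
  have h1 := permList_get π i i.2
  rw [h, permList_get σ i i.2] at h1
  simpa using h1.symm

theorem permList_surj {n : ℕ} (l : List ℕ) (h : List.Perm l (List.range n)) :
    ∃ π : Equiv.Perm (Fin n), permList π = l := by
  have hl : l.length = n := by simpa using h.length_eq
  have hnd : l.Nodup := h.nodup_iff.2 List.nodup_range
  let f : Fin n → Fin n := fun i => ⟨l[i.1]'(by omega), by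
    simpa using h.subset (List.getElem_mem (l := l) (n := i.1) (by omega))⟩
  have hf : Function.Injective f := by
    intro i j hij
    have := congrArg Fin.val hij
    exact Fin.ext ((hnd.getElem_inj_iff).1 this)
  refine ⟨Equiv.ofBijective f (Finite.injective_iff_bijective.1 hf), ?_⟩
  apply List.ext_getElem
  · simp [permList, hl]
  · intro i h1 h2
    simp [permList, f]

theorem card_eq_FV (n : ℕ) :
    Nat.card {π : Equiv.Perm (Fin n) // IsFishburn π ∧ AvoidsPat π [3, 2, 1]} = (FV n).card := by
  rw [← Nat.card_eq_finsetCard]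
  have hmem : ∀ π : Equiv.Perm (Fin n),
      (IsFishburn π ∧ AvoidsPat π [3, 2, 1]) ↔ (permList π).reverse ∈ FV n := by
    intro π
    rw [mem_FV, FFb_iff, AvoidsPat, FAv_iff]
    have := (List.reverse_perm (permList π)).trans (permList_perm π)
    tauto
  apply Nat.card_eq_of_bijective
    (fun π : {π : Equiv.Perm (Fin n) // IsFishburn π ∧ AvoidsPat π [3, 2, 1]} =>
      (⟨(permList π.1).reverse, (hmem π.1).1 π.2⟩ : FV n))
  constructor
  · rintro ⟨π, h⟩ ⟨σ, h'⟩ e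
    simp only [Subtype.mk.injEq, List.reverse_inj] at e
    exact Subtype.ext (permList_inj e)
  · rintro ⟨r, hr⟩
    obtain ⟨π, e⟩ := permList_surj r.reverse ((List.reverse_perm r).trans ((mem_FV n r).1 hr).1)
    have e' : (permList π).reverse = r := by rw [e, List.reverse_reverse]
    exact ⟨⟨π, (hmem π).2 (e' ▸ hr)⟩, Subtype.ext e'⟩

theorem stmt9 (n : ℕ) (hn : 1 ≤ n) :
    (Nat.card {π : Equiv.Perm (Fin n) // IsFishburn π ∧ AvoidsPat π [3, 2, 1]} : ℚ) =
      ∑ j ∈ Finset.range ((n - 1) / 2 + 1),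
        (-1 : ℚ) ^ j / ((n : ℚ) - (j : ℚ)) * (Nat.choose (n - j) j) *
          (Nat.choose (2 * n - 3 * j) (n - j + 1)) := by
  rw [← FG_formula n hn, card_eq_FV]
  obtain ⟨m, rfl⟩ : ∃ m, n = m + 1 := ⟨n-1, by omega⟩
  rw [FV_card, FD_final]
end

section
/- For n > 1, the number of indecomposable Fishburn permutations of size n avoiding the classical pattern 132 is 2^{n−2}. -/
open Finset

/-- Function version of "Fishburn and 132-avoiding". -/
def GoodFn {n : ℕ} (f : Fin n → Fin n) : Prop :=
  Function.Injective f ∧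
  (∀ i j k : Fin n, i < k → (j : ℕ) = i + 1 → (f i : ℕ) = f k + 1 → ¬ f i < f j) ∧
  (∀ i j k : Fin n, i < j → j < k → ¬ (f i < f k ∧ f k < f j))

lemma avoids_iff {n : ℕ} (π : Equiv.Perm (Fin n)) :
    AvoidsPat π [1, 3, 2] ↔
      ∀ i j k : Fin n, i < j → j < k → ¬ (π i < π k ∧ π k < π j) := by
  have hlen : (permList π).length = n := by simp [permList]
  have hget : ∀ a : Fin (permList π).length,
      (permList π).get a = (π (Fin.cast hlen a) : ℕ) := by
    rintro ⟨a, ha⟩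
    rw [List.get_eq_getElem]
    simp [permList]
    rfl
  unfold AvoidsPat SeqContains
  constructor
  · rintro h i j k hij hjk ⟨h1, h2⟩
    apply h
    refine ⟨fun a => Fin.cast hlen.symm ((![i, j, k] : Fin 3 → Fin n) a), ?_, ?_⟩
    · intro a b hab
      change Fin 3 at a b
      have hik := hij.trans hjk
      fin_cases a <;> fin_cases b <;> simp_all
    · intro a b
      rw [hget, hget]
      change Fin 3 at a b
      simp only [Fin.lt_def] at *
      fin_cases a <;> fin_cases b <;> simp <;> omega
  · rintro h ⟨f, hf, hp⟩
    refine h (Fin.cast hlen (f ⟨0, by simp⟩)) (Fin.cast hlen (f ⟨1, by simp⟩))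
      (Fin.cast hlen (f ⟨2, by simp⟩)) ?_ ?_ ⟨?_, ?_⟩
    · exact hf (by simp)
    · exact hf (by simp)
    · have := (hp ⟨0, by simp⟩ ⟨2, by simp⟩).1 (by simp)
      rw [hget, hget] at this
      exact this
    · have := (hp ⟨2, by simp⟩ ⟨1, by simp⟩).1 (by simp)
      rw [hget, hget] at this
      exact this

lemma goodFn_iff {n : ℕ} (π : Equiv.Perm (Fin n)) :
    GoodFn (π : Fin n → Fin n) ↔ IsFishburn π ∧ AvoidsPat π [1, 3, 2] := by
  rw [avoids_iff]
  unfold GoodFn IsFishburn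
  constructor
  · rintro ⟨_, h, h'⟩
    refine ⟨?_, h'⟩
    intro i k hi hk hik he
    exact h ⟨i, hi⟩ ⟨i + 1, by omega⟩ ⟨k, hk⟩ hik rfl he
  · rintro ⟨h, h'⟩
    refine ⟨π.injective, ?_, h'⟩
    rintro ⟨i, hi⟩ ⟨j, hj⟩ ⟨k, hk⟩ hik hj' he
    simp only at hj'
    subst hj'
    exact h i k hi hk hik he

/-- Key dichotomy: the maximum is first or last. -/
lemma good_dichotomy {n : ℕ} {f : Fin (n + 1) → Fin (n + 1)} (hf : GoodFn f) :
    f 0 = Fin.last n ∨ f (Fin.last n) = Fin.last n := by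
  obtain ⟨hinj, hF, hA⟩ := hf
  have hsurj : Function.Surjective f := Finite.injective_iff_surjective.1 hinj
  obtain ⟨p, hp⟩ := hsurj (Fin.last n)
  by_contra! hcon
  obtain ⟨h0, hl⟩ := hcon
  have hp0 : 0 < p := by
    rw [Fin.pos_iff_ne_zero]; rintro rfl; exact h0 hp
  have hpl : p < Fin.last n := by
    rw [Fin.lt_last_iff_ne_last]; rintro rfl; exact hl hp
  have hmax : ∀ a, a ≠ p → f a < f p := by
    intro a ha
    rw [hp, Fin.lt_last_iff_ne_last, ← hp]
    exact fun h => ha (hinj h)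
  have hsep : ∀ i k, i < p → p < k → f k < f i := by
    intro i k hi hk
    by_contra hc
    have hne : f i ≠ f k := fun h => (hi.trans hk).ne (hinj h)
    exact hA i p k hi hk ⟨lt_of_le_of_ne (not_lt.1 hc) hne, hmax k hk.ne'⟩
  obtain ⟨i, hi, hmin⟩ := Finset.exists_min_image (Finset.univ.filter (· < p)) f
    ⟨0, by simpa using hp0⟩
  simp only [Finset.mem_filter, Finset.mem_univ, true_and] at hi hmin
  have hpos := hsep i (Fin.last n) hi hpl
  obtain ⟨k, hk⟩ := hsurj ⟨(f i : ℕ) - 1, by omega⟩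
  have hk' : (f i : ℕ) = f k + 1 := by
    rw [hk]; simp only [Fin.lt_def] at hpos ⊢; omega
  have hpk : p < k := by
    by_contra hc
    rcases lt_or_eq_of_le (not_lt.1 hc) with h | h
    · have := hmin k h
      simp only [Fin.le_def] at this; omega
    · have := hmax i hi.ne
      rw [← h] at this
      simp only [Fin.lt_def] at this; omega
  have hi1 : (i : ℕ) + 1 < n + 1 := by
    simp only [Fin.lt_def] at hi; omega
  refine hF i ⟨i + 1, hi1⟩ k (hi.trans hpk) rfl hk' ?_
  by_cases hip : (i : ℕ) + 1 = p
  · have : (⟨i + 1, hi1⟩ : Fin (n + 1)) = p := Fin.ext hip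
    rw [this]; exact hmax i hi.ne
  · have hlt : (⟨i + 1, hi1⟩ : Fin (n + 1)) < p := by
      simp only [Fin.lt_def] at hi ⊢; omega
    refine lt_of_le_of_ne (hmin _ hlt) fun h => ?_
    have := congrArg Fin.val (hinj h)
    simp at this

/-- Put the maximum first. -/
def consMax {n : ℕ} (g : Fin n → Fin n) : Fin (n + 1) → Fin (n + 1) :=
  Fin.cons (Fin.last n) fun i => (g i).castSucc

/-- Put the maximum last. -/
def snocMax {n : ℕ} (g : Fin n → Fin n) : Fin (n + 1) → Fin (n + 1) :=
  Fin.lastCases (Fin.last n) fun i => (g i).castSucc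

@[simp] lemma consMax_zero {n : ℕ} (g : Fin n → Fin n) : consMax g 0 = Fin.last n := rfl
@[simp] lemma consMax_succ {n : ℕ} (g : Fin n → Fin n) (i : Fin n) :
    consMax g i.succ = (g i).castSucc := rfl
@[simp] lemma snocMax_last {n : ℕ} (g : Fin n → Fin n) :
    snocMax g (Fin.last n) = Fin.last n := by simp [snocMax]
@[simp] lemma snocMax_castSucc {n : ℕ} (g : Fin n → Fin n) (i : Fin n) :
    snocMax g i.castSucc = (g i).castSucc := by simp [snocMax]

lemma consMax_inj {n : ℕ} : Function.Injective (consMax (n := n)) := by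
  intro g g' h
  funext i
  have := congrFun h i.succ
  simpa using this

lemma snocMax_inj {n : ℕ} : Function.Injective (snocMax (n := n)) := by
  intro g g' h
  funext i
  have := congrFun h i.castSucc
  simpa using this

lemma good_consMax {n : ℕ} (g : Fin n → Fin n) : GoodFn (consMax g) ↔ GoodFn g := by
  constructor
  · rintro ⟨h1, h2, h3⟩
    refine ⟨?_, ?_, ?_⟩
    · intro a b hab
      have := @h1 a.succ b.succ (by simp [hab])
      simpa using this
    · intro i j k hik hj he
      have := h2 i.succ j.succ k.succ (by simpa using hik) (by simpa using hj)
        (by simpa using he)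
      simpa using this
    · intro i j k hij hjk
      have := h3 i.succ j.succ k.succ (by simpa using hij) (by simpa using hjk)
      simpa using this
  · rintro ⟨h1, h2, h3⟩
    refine ⟨?_, ?_, ?_⟩
    · intro a b
      cases a using Fin.cases with
      | zero => cases b using Fin.cases with
        | zero => simp
        | succ b => intro h; simp [Fin.ext_iff] at h; omega
      | succ a => cases b using Fin.cases with
        | zero => intro h; simp [Fin.ext_iff] at h; omega
        | succ b => intro h; simp at h; rw [h1 h]
    · intro i j k hik hj he
      cases i using Fin.cases with
      | zero => simpa using Fin.le_last _
      | succ i =>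
        cases k using Fin.cases with
        | zero => simp at hik
        | succ k =>
          cases j using Fin.cases with
          | zero => simp at hj
          | succ j =>
            have := h2 i j k (by simpa using hik) (by simpa using hj) (by simpa using he)
            simpa using this
    · intro i j k hij hjk
      cases k using Fin.cases with
      | zero => simp at hjk
      | succ k =>
        cases j using Fin.cases with
        | zero => simp at hij
        | succ j =>
          cases i using Fin.cases with
          | zero => rintro ⟨h, -⟩; exact absurd h (by simpa using Fin.le_last _)
          | succ i =>
            have := h3 i j k (by simpa using hij) (by simpa using hjk)
            simpa using this

lemma good_snocMax {n : ℕ} (g : Fin n → Fin n) : GoodFn (snocMax g) ↔ GoodFn g := by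
  constructor
  · rintro ⟨h1, h2, h3⟩
    refine ⟨?_, ?_, ?_⟩
    · intro a b hab
      have := @h1 a.castSucc b.castSucc (by simp [hab])
      simpa using this
    · intro i j k hik hj he
      have := h2 i.castSucc j.castSucc k.castSucc (by simpa using hik) (by simpa using hj)
        (by simpa using he)
      simpa using this
    · intro i j k hij hjk
      have := h3 i.castSucc j.castSucc k.castSucc (by simpa using hij) (by simpa using hjk)
      simpa using this
  · rintro ⟨h1, h2, h3⟩
    refine ⟨?_, ?_, ?_⟩
    · intro a b
      cases a using Fin.lastCases with
      | last => cases b using Fin.lastCases with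
        | last => simp
        | cast b => intro h; simp [Fin.ext_iff] at h; omega
      | cast a => cases b using Fin.lastCases with
        | last => intro h; simp [Fin.ext_iff] at h; omega
        | cast b => intro h; simp at h; rw [h1 h]
    · intro i j k hik hj he
      cases k using Fin.lastCases with
      | last => simp at he; omega
      | cast k =>
        cases i using Fin.lastCases with
        | last => simp only [Fin.lt_def, Fin.val_last, Fin.val_castSucc] at hik; omega
        | cast i =>
          cases j using Fin.lastCases with
          | last => simp only [Fin.lt_def, Fin.val_last, Fin.val_castSucc] at hik hj; omega
          | cast j =>
            have := h2 i j k (by simpa using hik) (by simpa using hj) (by simpa using he)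
            simpa using this
    · intro i j k hij hjk
      cases k using Fin.lastCases with
      | last => rintro ⟨-, h⟩; exact absurd h (by simpa using Fin.le_last _)
      | cast k =>
        cases j using Fin.lastCases with
        | last => simp only [Fin.lt_def, Fin.val_last, Fin.val_castSucc] at hjk; omega
        | cast j =>
          cases i using Fin.lastCases with
          | last => simp only [Fin.lt_def, Fin.val_last, Fin.val_castSucc] at hij; omega
          | cast i =>
            have := h3 i j k (by simpa using hij) (by simpa using hjk)
            simpa using this

lemma exists_consMax {n : ℕ} {f : Fin (n + 1) → Fin (n + 1)} (hinj : Function.Injective f)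
    (h0 : f 0 = Fin.last n) : ∃ g, consMax g = f := by
  have hne : ∀ i : Fin n, f i.succ ≠ Fin.last n := fun i h => by
    rw [← h0] at h
    exact Fin.succ_ne_zero i (hinj h)
  refine ⟨fun i => (f i.succ).castPred (hne i), ?_⟩
  funext i
  cases i using Fin.cases with
  | zero => simp [h0]
  | succ i => simp

lemma exists_snocMax {n : ℕ} {f : Fin (n + 1) → Fin (n + 1)} (hinj : Function.Injective f)
    (h0 : f (Fin.last n) = Fin.last n) : ∃ g, snocMax g = f := by
  have hne : ∀ i : Fin n, f i.castSucc ≠ Fin.last n := fun i h => by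
    rw [← h0] at h
    exact (Fin.castSucc_lt_last i).ne (hinj h)
  refine ⟨fun i => (f i.castSucc).castPred (hne i), ?_⟩
  funext i
  cases i using Fin.lastCases with
  | last => simp [h0]
  | cast i => simp

/-- The set of good functions. -/
def goodSet (n : ℕ) : Set (Fin n → Fin n) := {f | GoodFn f}

lemma goodSet_succ (n : ℕ) :
    goodSet (n + 1) = consMax '' goodSet n ∪ snocMax '' goodSet n := by
  ext f
  constructor
  · intro hf
    rcases good_dichotomy hf with h | h
    · obtain ⟨g, rfl⟩ := exists_consMax hf.1 h
      exact Or.inl ⟨g, (good_consMax g).1 hf, rfl⟩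
    · obtain ⟨g, rfl⟩ := exists_snocMax hf.1 h
      exact Or.inr ⟨g, (good_snocMax g).1 hf, rfl⟩
  · rintro (⟨g, hg, rfl⟩ | ⟨g, hg, rfl⟩)
    · exact (good_consMax g).2 hg
    · exact (good_snocMax g).2 hg

lemma card_goodSet (n : ℕ) : (goodSet (n + 1)).ncard = 2 ^ n := by
  induction n with
  | zero =>
    have : goodSet 1 = {id} := by
      ext f
      simp only [Set.mem_singleton_iff]
      constructor
      · intro _; exact Subsingleton.elim _ _
      · rintro rfl
        refine ⟨Function.injective_id, ?_, ?_⟩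
        · intro i j k h; exact absurd h (by simp [Subsingleton.elim i k])
        · intro i j k h; exact absurd h (by simp [Subsingleton.elim i j])
    rw [this]; simp
  | succ n ih =>
    rw [goodSet_succ, Set.ncard_union_eq ?_ (Set.toFinite _) (Set.toFinite _),
      Set.ncard_image_of_injective _ consMax_inj, Set.ncard_image_of_injective _ snocMax_inj,
      ih, pow_succ]
    · ring
    · rw [Set.disjoint_left]
      rintro _ ⟨g, hg, rfl⟩ ⟨g', hg', h⟩
      have h1 : snocMax g' (Fin.last (n + 1)) = consMax g 0 := by simp
      rw [h] at h1
      have := ((good_consMax g).2 hg).1 h1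
      simp [Fin.ext_iff] at this

lemma indec_iff {n : ℕ} (π : Equiv.Perm (Fin (n + 2))) (hπ : GoodFn π) :
    IsIndecomposable π ↔ π 0 = Fin.last (n + 1) := by
  constructor
  · intro h
    rcases good_dichotomy hπ with h0 | h0
    · exact h0
    · exfalso
      refine h ⟨n + 1, by omega, by omega, fun i hi => ?_⟩
      have hne : π i ≠ Fin.last (n + 1) := by
        rw [← h0]; intro h'
        have := π.injective h'
        rw [this] at hi; simp at hi
      exact Fin.lt_last_iff_ne_last.2 hne
  · rintro h ⟨k, hk, hkn, hall⟩
    have := hall 0 (by simpa using hk)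
    rw [h] at this
    simp at this
    omega

theorem stmt11 (n : ℕ) (hn : 1 < n) :
    Nat.card {π : Equiv.Perm (Fin n) //
        IsIndecomposable π ∧ IsFishburn π ∧ AvoidsPat π [1, 3, 2]} =
      2 ^ (n - 2) := by
  obtain ⟨m, rfl⟩ : ∃ m, n = m + 2 := ⟨n - 2, by omega⟩
  have key : (fun π : Equiv.Perm (Fin (m + 2)) => (π : Fin (m + 2) → Fin (m + 2))) ''
      {π | IsIndecomposable π ∧ IsFishburn π ∧ AvoidsPat π [1, 3, 2]} =
      consMax '' goodSet (m + 1) := by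
    ext f
    constructor
    · rintro ⟨π, ⟨hI, hG⟩, rfl⟩
      have hg := (goodFn_iff π).2 hG
      obtain ⟨g, hg'⟩ := exists_consMax hg.1 ((indec_iff π hg).1 hI)
      refine ⟨g, ?_, hg'⟩
      rw [← hg'] at hg
      exact (good_consMax g).1 hg
    · rintro ⟨g, hg, rfl⟩
      have hG := (good_consMax g).2 hg
      have hb := Finite.injective_iff_bijective.1 hG.1
      have hG' : GoodFn (Equiv.ofBijective _ hb : Equiv.Perm (Fin (m + 2))) := hG
      exact ⟨Equiv.ofBijective _ hb, ⟨(indec_iff _ hG').2 rfl, (goodFn_iff _).1 hG'⟩, rfl⟩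
  have h1 := congrArg Set.ncard key
  rw [Set.ncard_image_of_injective _ consMax_inj, card_goodSet,
    Set.ncard_image_of_injective _ DFunLike.coe_injective] at h1
  exact h1
end
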